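/- For every integer n ≥ 1, the number of partitions of n in which the largest part occurs exactly five times and all other parts are distinct satisfies ℓ_5(n) + q(n+9) + q(n+8) + q(n+2) + q(n+1) = q(n+10) + 2·q(n+5) + q(n); equivalently, ℓ_5(n) = q(n+10) − q(n+9) − q(n+8) + 2q(n+5) − q(n+2) − q(n+1) + q(n). In particular, q(n+1) + q(n+2) + q(n+8) + q(n+9) ≤ q(n) + 2·q(n+5) + q(n+10). -/

import Mathlib

/-!
For `k ≥ 1`, a partition counted by `l k n` is a pair `(m, S)`: the largest part `m`, taken `k`
times, together with the set `S ⊆ {1, …, m - 1}` of the other parts, where `k * m + ∑ S = n`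
(`card_rep`).

Take a partition counted by `l k (n + k)` with `n ≥ 1` and decrease each of the `k` copies of its
largest part by one. If the new value already was a part, the result is counted by `l (k + 1) n`,
otherwise by `l k n`; `n ≥ 1` ensures that the new value is positive. This is a bijection, whence
`l (k + 1) n + l k n = l k (n + k)` (`l_succ_add`). Since `l 1 n = q n` for `n ≥ 1`, iterating the
recurrence four times expresses `l 5 n` through `q`, with the coefficients of
`(x - 1) (x ^ 2 - 1) (x ^ 3 - 1) (x ^ 4 - 1)`. The inequality follows from `0 ≤ l 5 n`.
-/

/-- `q n` is the number of partitions of `n` into distinct parts. -/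
noncomputable def q (n : ℕ) : ℕ := Nat.card {p : n.Partition // p.parts.Nodup}

/-- A partition has its smallest part repeated exactly `k` times and all
other parts occurring exactly once. -/
def IsSmallestRep (k : ℕ) {n : ℕ} (p : n.Partition) : Prop :=
  ∃ m ∈ p.parts, (∀ a ∈ p.parts, m ≤ a) ∧ p.parts.count m = k ∧
    ∀ a ∈ p.parts, a ≠ m → p.parts.count a = 1

/-- `s k n` counts partitions of `n` whose smallest part occurs exactly `k`
times and whose other parts are distinct. -/
noncomputable def s (k n : ℕ) : ℕ := Nat.card {p : n.Partition // IsSmallestRep k p}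

/-- A partition has its largest part repeated exactly `k` times and all
other parts occurring exactly once. -/
def IsLargestRep (k : ℕ) {n : ℕ} (p : n.Partition) : Prop :=
  ∃ m ∈ p.parts, (∀ a ∈ p.parts, a ≤ m) ∧ p.parts.count m = k ∧
    ∀ a ∈ p.parts, a ≠ m → p.parts.count a = 1

/-- `l k n` counts partitions of `n` whose largest part occurs exactly `k`
times and whose other parts are distinct. -/
noncomputable def l (k n : ℕ) : ℕ := Nat.card {p : n.Partition // IsLargestRep k p}

/-- Pairs `(m, S)` encoding the partitions of `n` with largest part `m` occurring `k` times and
the remaining parts forming the set `S`. -/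
def MaxRep (k n : ℕ) : Type :=
  {x : ℕ × Finset ℕ // 1 ≤ x.1 ∧ (∀ a ∈ x.2, 0 < a ∧ a < x.1) ∧ k * x.1 + ∑ a ∈ x.2, a = n}

/-- The partition encoded by a pair `(m, S)`. -/
def MaxRep.toPartition {k n : ℕ} (x : MaxRep k n) : n.Partition where
  parts := Multiset.replicate k x.1.1 + x.1.2.val
  parts_pos := by
    obtain ⟨⟨m, S⟩, h1, h2, h3⟩ := x
    intro i hi
    rcases Multiset.mem_add.1 hi with h | h
    · exact (Multiset.eq_of_mem_replicate h).symm ▸ h1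
    · exact (h2 i h).1
  parts_sum := by
    obtain ⟨⟨m, S⟩, h1, h2, h3⟩ := x
    rw [Multiset.sum_add, Multiset.sum_replicate, smul_eq_mul, Finset.sum_val]
    exact h3

lemma MaxRep.isLargestRep {k n : ℕ} (hk : 1 ≤ k) (x : MaxRep k n) :
    IsLargestRep k x.toPartition := by
  obtain ⟨⟨m, S⟩, h1, h2, h3⟩ := x
  simp only at h1 h2 h3
  have hm : m ∉ S := fun h => (h2 m h).2.false
  refine ⟨m, ?_, ?_, ?_, ?_⟩
  · simp [MaxRep.toPartition, Multiset.mem_replicate]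
    omega
  · intro a ha
    simp only [MaxRep.toPartition, Multiset.mem_add, Multiset.mem_replicate, Finset.mem_val] at ha
    rcases ha with h | h
    · exact h.2.le
    · exact (h2 a h).2.le
  · simp [MaxRep.toPartition, hm]
  · intro a ha ham
    simp only [MaxRep.toPartition, Multiset.mem_add, Multiset.mem_replicate, Finset.mem_val] at ha
    have haS : a ∈ S := by tauto
    simp only [MaxRep.toPartition, Multiset.count_add, Multiset.count_replicate, if_neg ham.symm,
      zero_add]
    exact Multiset.count_eq_one_of_mem S.nodup haS

lemma MaxRep.bijective {k n : ℕ} (hk : 1 ≤ k) :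
    Function.Bijective (fun x : MaxRep k n =>
      (⟨x.toPartition, x.isLargestRep hk⟩ : {p : n.Partition // IsLargestRep k p})) := by
  constructor
  · rintro ⟨⟨m, S⟩, h1, h2, h3⟩ ⟨⟨m', S'⟩, h1', h2', h3'⟩ h
    simp only at h1 h2 h3 h1' h2' h3'
    have hp : Multiset.replicate k m + S.val = Multiset.replicate k m' + S'.val :=
      congrArg (fun p => p.1.parts) h
    -- Each of `m`, `m'` is the largest element of the common multiset of parts.
    have hmem : ∀ a, (a = m ∨ a ∈ S) ↔ (a = m' ∨ a ∈ S') := by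
      intro a
      have := congrArg (fun s => a ∈ s) hp
      simpa [Multiset.mem_replicate, show k ≠ 0 by omega] using this
    have hmm : m = m' := by
      apply le_antisymm
      · rcases (hmem m).1 (Or.inl rfl) with h | h
        · exact h.le
        · exact (h2' m h).2.le
      · rcases (hmem m').2 (Or.inl rfl) with h | h
        · exact h.le
        · exact (h2 m' h).2.le
    subst hmm
    have hS : S = S' := Finset.val_injective (add_left_cancel hp)
    subst hS
    rfl
  · rintro ⟨p, m, hm, hle, hc, hone⟩
    have hparts : Multiset.replicate k m + (p.parts.toFinset.erase m).val = p.parts := by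
      ext a
      rw [Multiset.count_add, Multiset.count_replicate]
      by_cases ham : a = m
      · subst ham
        have : a ∉ (p.parts.toFinset.erase a).val := Finset.notMem_erase a _
        rw [Multiset.count_eq_zero.2 this]
        simp [hc]
      · rw [if_neg (Ne.symm ham), zero_add]
        by_cases hap : a ∈ p.parts
        · rw [hone a hap ham]
          refine Multiset.count_eq_one_of_mem (Finset.nodup _) ?_
          exact Finset.mem_erase.2 ⟨ham, Multiset.mem_toFinset.2 hap⟩
        · rw [Multiset.count_eq_zero.2 hap, Multiset.count_eq_zero]
          exact fun h => hap (Multiset.mem_toFinset.1 (Finset.mem_of_mem_erase h))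
    refine ⟨⟨(m, p.parts.toFinset.erase m), p.parts_pos hm, ?_, ?_⟩, ?_⟩
    · intro a ha
      obtain ⟨ham, hap⟩ := Finset.mem_erase.1 ha
      have hap := Multiset.mem_toFinset.1 hap
      exact ⟨p.parts_pos hap, lt_of_le_of_ne (hle a hap) ham⟩
    · have := congrArg Multiset.sum hparts
      rw [p.parts_sum] at this
      simpa [Finset.sum] using this
    · exact Subtype.ext (Nat.Partition.ext hparts)

lemma card_rep {k n : ℕ} (hk : 1 ≤ k) : Nat.card (MaxRep k n) = l k n :=
  Nat.card_eq_of_bijective _ (MaxRep.bijective hk)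

lemma finite_rep {k n : ℕ} (hk : 1 ≤ k) : Finite (MaxRep k n) :=
  Finite.of_injective _ (MaxRep.bijective hk).1

/-- Raising the copies of the largest part by one, as a map on pairs: on `MaxRep k n` the set of
other parts is unchanged, and on `MaxRep (k + 1) n` one copy of the largest part stays behind. -/
def MaxRep.raise {k n : ℕ} : MaxRep (k + 1) n ⊕ MaxRep k n → MaxRep k (n + k)
  | .inl x => ⟨(x.1.1 + 1, insert x.1.1 x.1.2), by
      obtain ⟨⟨m, S⟩, h1, h2, h3⟩ := x
      simp only at h1 h2 h3
      have hm : m ∉ S := fun h => (h2 m h).2.false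
      refine ⟨by simp, ?_, ?_⟩
      · intro a ha
        rcases Finset.mem_insert.1 ha with h | h
        · subst h
          simp only; omega
        · have := h2 a h
          simp only; omega
      · simp only [Finset.sum_insert hm]
        linarith⟩
  | .inr x => ⟨(x.1.1 + 1, x.1.2), by
      obtain ⟨⟨m, S⟩, h1, h2, h3⟩ := x
      simp only at h1 h2 h3
      refine ⟨by simp, ?_, ?_⟩
      · intro a ha
        have := h2 a ha
        simp only; omega
      · simp only
        linarith⟩

lemma MaxRep.raise_bijective {k n : ℕ} (hn : 1 ≤ n) :
    Function.Bijective (MaxRep.raise (k := k) (n := n)) := by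
  constructor
  · rintro (⟨⟨m, S⟩, h1, h2, h3⟩ | ⟨⟨m, S⟩, h1, h2, h3⟩)
      (⟨⟨m', S'⟩, h1', h2', h3'⟩ | ⟨⟨m', S'⟩, h1', h2', h3'⟩) h
    all_goals
      simp only at h1 h2 h3 h1' h2' h3'
      have hm : m ∉ S := fun h => (h2 m h).2.false
      have hm' : m' ∉ S' := fun h => (h2' m' h).2.false
      have h := congrArg Subtype.val h
      simp only [MaxRep.raise, Prod.mk.injEq, add_left_inj] at h
      obtain ⟨rfl, hS⟩ := h
    · have : S = S' := by
        rw [← Finset.erase_insert hm, hS, Finset.erase_insert hm']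
      subst this
      rfl
    · exact absurd (hS ▸ Finset.mem_insert_self m S) hm'
    · exact absurd (hS ▸ Finset.mem_insert_self m S') hm
    · subst hS
      rfl
  · rintro ⟨⟨m, S⟩, h1, h2, h3⟩
    simp only at h1 h2 h3
    obtain ⟨m, rfl⟩ : ∃ j, m = j + 1 := ⟨m - 1, by omega⟩
    -- If the lowered value were `0`, there would be no other parts and the total would be `k`.
    have hm : 1 ≤ m := by
      by_contra hm
      obtain rfl : m = 0 := by omega
      have hS : S = ∅ := Finset.eq_empty_of_forall_notMem fun a ha => by
        have := h2 a ha
        omega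
      subst hS
      simp at h3
      omega
    by_cases hmS : m ∈ S
    · refine ⟨.inl ⟨(m, S.erase m), hm, ?_, ?_⟩, ?_⟩
      · intro a ha
        obtain ⟨ham, haS⟩ := Finset.mem_erase.1 ha
        have := h2 a haS
        simp only; omega
      · have := Finset.add_sum_erase S (fun a => a) hmS
        simp only at this ⊢
        linarith
      · apply Subtype.ext
        simp [MaxRep.raise, Finset.insert_erase hmS]
    · refine ⟨.inr ⟨(m, S), hm, ?_, ?_⟩, rfl⟩
      · intro a ha
        have := h2 a ha
        have : a ≠ m := fun h => hmS (h ▸ ha)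
        simp only; omega
      · simp only
        linarith

lemma l_succ_add {k n : ℕ} (hk : 1 ≤ k) (hn : 1 ≤ n) :
    l (k + 1) n + l k n = l k (n + k) := by
  have := finite_rep (n := n) hk
  have := finite_rep (k := k + 1) (n := n) (by omega)
  rw [← card_rep hk, ← card_rep hk, ← card_rep (by omega), ← Nat.card_sum]
  exact Nat.card_eq_of_bijective _ (MaxRep.raise_bijective hn)

/-- The hypothesis `1 ≤ n` excludes the empty partition, which has no largest part. -/
lemma l_one {n : ℕ} (hn : 1 ≤ n) : l 1 n = q n := by
  refine Nat.card_congr (Equiv.subtypeEquivRight fun p => ?_)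
  constructor
  · rintro ⟨m, hm, -, hc, hone⟩
    rw [Multiset.nodup_iff_count_eq_one]
    intro a ha
    by_cases h : a = m
    · rw [h, hc]
    · exact hone a ha h
  · intro hp
    have hne : p.parts.toFinset.Nonempty := by
      rw [Multiset.toFinset_nonempty]
      intro h
      have := p.parts_sum
      rw [h, Multiset.sum_zero] at this
      omega
    have hmem := Multiset.mem_toFinset.1 (p.parts.toFinset.max'_mem hne)
    exact ⟨p.parts.toFinset.max' hne, hmem,
      fun a ha => Finset.le_max' _ _ (Multiset.mem_toFinset.2 ha),
      Multiset.count_eq_one_of_mem hp hmem,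
      fun a ha _ => Multiset.count_eq_one_of_mem hp ha⟩

theorem l5_eq (n : ℕ) (hn : 1 ≤ n) :
    l 5 n + q (n + 9) + q (n + 8) + q (n + 2) + q (n + 1) =
        q (n + 10) + 2 * q (n + 5) + q n ∧
      q (n + 1) + q (n + 2) + q (n + 8) + q (n + 9) ≤
        q n + 2 * q (n + 5) + q (n + 10) := by
  have h2 : ∀ j, l 2 (n + j) + q (n + j) = q (n + j + 1) := fun j => by
    rw [← l_one (by omega), ← l_one (by omega)]
    exact l_succ_add le_rfl (by omega)
  have h3 : ∀ j, l 3 (n + j) + l 2 (n + j) = l 2 (n + (j + 2)) := fun j =>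
    l_succ_add (k := 2) (by omega) (by omega)
  have h4 : ∀ j, l 4 (n + j) + l 3 (n + j) = l 3 (n + (j + 3)) := fun j =>
    l_succ_add (k := 3) (by omega) (by omega)
  have h5 : l 5 n + l 4 n = l 4 (n + 4) := l_succ_add (k := 4) (by omega) hn
  have a0 := h2 0
  have a2 := h2 2
  have a3 := h2 3
  have a4 := h2 4
  have a5 := h2 5
  have a6 := h2 6
  have a7 := h2 7
  have a9 := h2 9
  have b0 := h3 0
  have b3 := h3 3
  have b4 := h3 4
  have b7 := h3 7
  have c0 := h4 0
  have c4 := h4 4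
  simp only [add_assoc, Nat.reduceAdd, add_zero, zero_add] at *
  omega
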